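/- Let n, ℓ, r ≥ 2. The minimum size of a set M ⊆ C([n],r) of r-subsets of [n] with the property that every ℓ-subset L ⊆ [n] contains a pair {a,b} ⊆ L whose full star {E ∈ C([n],r) : {a,b} ⊆ E} is contained in M, equals C(n,r) − t_r(n,ℓ−1). Equivalently, the initial degree of the missing codegree-star ideal J^{(r)}_{n,ℓ} is C(n,r) − t_r(n,ℓ−1). -/

import Mathlib

/-- The `i`-th balanced part size of a partition of `n` into `q` parts. -/
def balancedPart (n q : ℕ) (i : Fin q) : ℕ :=
  n / q + if (i : ℕ) < n % q then 1 else 0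

/-- `t_r(n,q) = ∑_{S ⊆ [q], |S| = r} ∏_{i ∈ S} n_i`, the number of edges of the
complete balanced `q`-partite `r`-graph on `n` vertices. -/
def turanNum (n q r : ℕ) : ℕ :=
  ∑ S ∈ (Finset.univ : Finset (Fin q)).powersetCard r, ∏ i ∈ S, balancedPart n q i

def bal (n q : ℕ) : Multiset ℕ := (Finset.univ : Finset (Fin q)).val.map (balancedPart n q)

lemma turanNum_eq (n q r : ℕ) : turanNum n q r = (bal n q).esymm r := by
  rw [bal, Finset.esymm_map_val]; rfl

lemma esymm_cons_succ (a : ℕ) (s : Multiset ℕ) (r : ℕ) :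
    (a ::ₘ s).esymm (r+1) = s.esymm (r+1) + a * s.esymm r := by
  simp [Multiset.esymm, Multiset.powersetCard_cons, Multiset.sum_map_mul_left]

lemma esymm_zero' (s : Multiset ℕ) : s.esymm 0 = 1 := by
  simp [Multiset.esymm]

lemma esymm_smooth (x y : ℕ) (h : y + 2 ≤ x) (s : Multiset ℕ) (r : ℕ) :
    (x ::ₘ y ::ₘ s).esymm r ≤ ((x-1) ::ₘ (y+1) ::ₘ s).esymm r := by
  obtain ⟨z, rfl⟩ : ∃ z, x = z + 1 := ⟨x-1, by omega⟩
  match r with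
  | 0 => simp [esymm_zero']
  | 1 => simp only [esymm_cons_succ, esymm_zero', Nat.add_sub_cancel]; simp [esymm_cons_succ, esymm_zero']; omega
  | r+2 =>
    simp only [esymm_cons_succ, Nat.add_sub_cancel]
    have : y * s.esymm r ≤ z * s.esymm r := Nat.mul_le_mul_right _ (by omega)
    nlinarith

lemma bal_eq_of (s : Multiset ℕ) (hne : s ≠ 0) (h : ∀ x ∈ s, ∀ y ∈ s, x ≤ y + 1) :
    s = bal s.sum s.card := by
  obtain ⟨m, hm, hmin⟩ : ∃ m ∈ s, ∀ x ∈ s, m ≤ x := by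
    obtain ⟨a, ha⟩ := Multiset.exists_mem_of_ne_zero hne
    have hs : s.toFinset.Nonempty := ⟨a, by simpa using ha⟩
    refine ⟨s.toFinset.min' hs, by simpa using s.toFinset.min'_mem hs, fun x hx => Finset.min'_le _ _ (by simpa using hx)⟩
  have hs : s = Multiset.replicate (s.count m) m + Multiset.replicate (s.count (m+1)) (m+1) := by
    ext x
    simp only [Multiset.count_add, Multiset.count_replicate]
    by_cases hx : x ∈ s
    · have := h x hx m hm
      have := hmin x hx
      obtain rfl | rfl : x = m ∨ x = m+1 := by omega
      · simp
      · simp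
    · have : s.count x = 0 := Multiset.count_eq_zero.2 hx
      split_ifs <;> subst_vars <;> simp_all
  have hc : 0 < s.count m := Multiset.count_pos.2 hm
  generalize s.count m = u at *
  generalize s.count (m+1) = c at *
  have hcard : s.card = u + c := by rw [hs]; simp
  have hsum : s.sum = (u + c) * m + c := by rw [hs]; simp; ring
  have hdiv : ((u + c) * m + c) / (u+c) = m := by
    rw [Nat.mul_add_div (by omega), Nat.div_eq_of_lt (by omega)]; rfl
  have hmod : ((u + c) * m + c) % (u+c) = c := by
    rw [Nat.mul_add_mod, Nat.mod_eq_of_lt (by omega)]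
  rw [hcard, hsum, hs, add_comm]
  have : bal ((u + c) * m + c) (u+c) =
     (Multiset.range (u+c)).map (fun i => m + if i < c then 1 else 0) := by
    have h1 : (Multiset.range (u+c)) = (Finset.univ : Finset (Fin (u+c))).val.map (fun i : Fin (u+c) => (i:ℕ)) := by
      have := congrArg Finset.val (Fin.map_valEmbedding_univ (n := u + c))
      rw [← Finset.range_val, ← Nat.Iio_eq_range, ← this]; rfl
    rw [h1, Multiset.map_map]
    unfold bal balancedPart
    simp [hdiv, hmod]
  rw [this, add_comm u c, Multiset.range_add, Multiset.map_add, Multiset.map_map]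
  congr 1
  · symm
    rw [Multiset.eq_replicate]
    refine ⟨by simp, fun b hb => ?_⟩
    obtain ⟨x, hx, rfl⟩ := Multiset.mem_map.1 hb
    simp [Multiset.mem_range.1 hx]
  · symm
    rw [Multiset.eq_replicate]
    refine ⟨by simp, fun b hb => ?_⟩
    obtain ⟨x, hx, rfl⟩ := Multiset.mem_map.1 hb
    simp

lemma esymm_le_bal (r : ℕ) : ∀ (N : ℕ) (s : Multiset ℕ), (s.map (fun x => x^2)).sum = N →
    s.esymm r ≤ (bal s.sum s.card).esymm r := by
  intro N
  induction N using Nat.strong_induction_on with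
  | _ N ih =>
    intro s hs
    by_cases h0 : s = 0
    · subst h0
      apply le_of_eq
      congr 1
    by_cases h : ∀ x ∈ s, ∀ y ∈ s, x ≤ y + 1
    · rw [← bal_eq_of s h0 h]
    · push Not at h
      obtain ⟨x, hx, y, hy, hxy⟩ := h
      obtain ⟨t, rfl⟩ := Multiset.exists_cons_of_mem hx
      have hy' : y ∈ t := by
        rcases Multiset.mem_cons.1 hy with h | h
        · omega
        · exact h
      obtain ⟨t, rfl⟩ := Multiset.exists_cons_of_mem hy'
      refine (esymm_smooth x y (by omega) t r).trans ?_
      have := ih _ ?_ ((x-1) ::ₘ (y+1) ::ₘ t) rfl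
      · have e1 : (x ::ₘ y ::ₘ t).sum = ((x-1) ::ₘ (y+1) ::ₘ t).sum := by
          simp only [Multiset.sum_cons]; omega
        have e2 : (x ::ₘ y ::ₘ t).card = ((x-1) ::ₘ (y+1) ::ₘ t).card := by simp
        rw [e1, e2]; exact this
      · rw [← hs]
        obtain ⟨z, rfl⟩ : ∃ z, x = z + 1 := ⟨x-1, by omega⟩
        simp
        nlinarith

lemma fiber_card (n q : ℕ) (hq : 0 < q) (j : Fin q) :
    ((Finset.univ : Finset (Fin n)).filter (fun i : Fin n => (i:ℕ) % q = j)).card = balancedPart n q j := by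
  have h := Nat.count_modEq_card n hq (j:ℕ)
  rw [Nat.mod_eq_of_lt j.2] at h
  rw [balancedPart, ← h, Nat.count_eq_card_filter_range, ← Finset.card_map Fin.valEmbedding]
  congr 1
  ext x
  simp only [Finset.mem_map, Finset.mem_filter, Finset.mem_univ, true_and, Fin.valEmbedding_apply,
    Finset.mem_range, Nat.ModEq, Nat.mod_eq_of_lt j.2]
  constructor
  · rintro ⟨a, ha, rfl⟩; exact ⟨a.2, ha⟩
  · rintro ⟨h1, h2⟩; exact ⟨⟨x, h1⟩, h2, rfl⟩

lemma bal_sum (n q : ℕ) (hq : 0 < q) : (bal n q).sum = n := by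
  have h : (bal n q).sum = ∑ j : Fin q, balancedPart n q j := rfl
  rw [h]
  simp_rw [← fiber_card n q hq]
  have := Finset.card_eq_sum_card_fiberwise (s := (Finset.univ : Finset (Fin n)))
    (t := (Finset.univ : Finset (Fin q))) (f := fun i : Fin n => (⟨(i:ℕ) % q, Nat.mod_lt _ hq⟩ : Fin q)) (by intro x _; simp)
  simpa [Fin.ext_iff] using this.symm

open Classical in
lemma turan_le_transversal (n q r : ℕ) (hq : 0 < q) :
    turanNum n q r ≤ (((Finset.univ : Finset (Fin n)).powersetCard r).filter
      (fun E : Finset (Fin n) => Set.InjOn (fun i : Fin n => (i:ℕ) % q) (E : Set (Fin n)))).card := by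
  classical
  let F : Fin q → Finset (Fin n) := fun j => Finset.univ.filter (fun i : Fin n => (i:ℕ) % q = j)
  have h : turanNum n q r = (((Finset.univ : Finset (Fin q)).powersetCard r).sigma
      (fun S => S.pi (fun j => F j))).card := by
    rw [Finset.card_sigma, turanNum]
    refine Finset.sum_congr rfl fun S _ => ?_
    rw [Finset.card_pi]
    exact Finset.prod_congr rfl fun j _ => (fiber_card n q hq j).symm
  rw [h]
  have hF : ∀ (S : Finset (Fin q)) (f : ∀ a ∈ S, Fin n), f ∈ S.pi (fun j => F j) →
      ∀ a (ha : a ∈ S), ((f a ha : Fin n) : ℕ) % q = a := by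
    intro S f hf a ha
    have := Finset.mem_pi.1 hf a ha
    simpa [F] using this
  apply Finset.card_le_card_of_injOn
    (fun p : (S : Finset (Fin q)) × (∀ a ∈ S, Fin n) => p.1.attach.image (fun j => p.2 j.1 j.2))
  · rintro ⟨S, f⟩ hp
    simp only [Finset.coe_sigma, Set.mem_sigma_iff, Finset.mem_coe, Finset.mem_powersetCard] at hp
    obtain ⟨⟨_, hS⟩, hf⟩ := hp
    have hf' := hF S f hf
    simp only [Finset.coe_filter, Set.mem_ofPred_eq, Finset.mem_powersetCard]
    refine ⟨⟨Finset.subset_univ _, ?_⟩, ?_⟩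
    · rw [Finset.card_image_of_injective, Finset.card_attach, hS]
      intro a b hab
      have h1 := hf' a a.2
      have h2 := hf' b b.2
      simp only at hab
      rw [hab] at h1
      exact Subtype.ext (Fin.ext (h1.symm.trans h2))
    · intro x hx y hy hxy
      simp only [Finset.coe_image, Set.mem_image, Finset.mem_coe, Finset.mem_attach, true_and, Subtype.exists] at hx hy
      obtain ⟨a, ha, rfl⟩ := hx
      obtain ⟨b, hb, rfl⟩ := hy
      simp only [hf'] at hxy
      obtain rfl := Fin.ext hxy
      rfl
  · rintro ⟨S, f⟩ hp ⟨T, g⟩ hp' hE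
    simp only [Finset.coe_sigma, Set.mem_sigma_iff, Finset.mem_coe, Finset.mem_powersetCard] at hp hp'
    have hf' := hF S f hp.2
    have hg' := hF T g hp'.2
    simp only at hE
    have key : ∀ (S : Finset (Fin q)) (f : ∀ a ∈ S, Fin n) (T : Finset (Fin q)) (g : ∀ a ∈ T, Fin n),
        (∀ a (ha : a ∈ S), ((f a ha : Fin n) : ℕ) % q = a) →
        (∀ a (ha : a ∈ T), ((g a ha : Fin n) : ℕ) % q = a) →
        S.attach.image (fun j => f j.1 j.2) = T.attach.image (fun j => g j.1 j.2) →
        ∀ a (ha : a ∈ S), ∃ hb : a ∈ T, f a ha = g a hb := by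
      intro S f T g hf hg hE a ha
      have : f a ha ∈ T.attach.image (fun j => g j.1 j.2) := by
        rw [← hE]; exact Finset.mem_image.2 ⟨⟨a, ha⟩, Finset.mem_attach _ _, rfl⟩
      obtain ⟨⟨b, hb⟩, _, hbe⟩ := Finset.mem_image.1 this
      simp only at hbe
      have h1 := hf a ha
      rw [← hbe, hg b hb] at h1
      obtain rfl := Fin.ext h1
      exact ⟨hb, hbe.symm⟩
    obtain rfl : S = T := Finset.Subset.antisymm
      (fun a ha => (key S f T g hf' hg' hE a ha).1) (fun a ha => (key T g S f hg' hf' hE.symm a ha).1)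
    congr 1
    funext a ha
    exact (key S f S g hf' hg' hE a ha).2

noncomputable def KK {V : Type*} [DecidableEq V] (G : SimpleGraph V) (r : ℕ) (s : Finset V) : Finset (Finset V) := by
  classical exact (s.powersetCard r).filter (fun E => G.IsClique (E : Set V))

lemma mem_KK {V : Type*} [DecidableEq V] (G : SimpleGraph V) (r : ℕ) (s E : Finset V) :
    E ∈ KK G r s ↔ (E ⊆ s ∧ E.card = r) ∧ G.IsClique (E : Set V) := by
  simp [KK, Finset.mem_powersetCard]

lemma KK_rec {V : Type*} [DecidableEq V] (G : SimpleGraph V) (r : ℕ) (s : Finset V) (hs : s.Nonempty) :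
    ∃ v ∈ s, ∃ A ⊆ s, (∀ a ∈ A, G.Adj v a) ∧
      (KK G (r+1) s).card ≤ (KK G (r+1) A).card + (s \ A).card * (KK G r A).card := by
  classical
  let d : V → ℕ := fun v => ((KK G (r+1) s).filter (fun E => v ∈ E)).card
  obtain ⟨v, hv, hmax⟩ := Finset.exists_max_image s d hs
  refine ⟨v, hv, s.filter (fun a => G.Adj v a), Finset.filter_subset _ _, by simp, ?_⟩
  set A := s.filter (fun a => G.Adj v a) with hA
  have hd : d v ≤ (KK G r A).card := by
    apply Finset.card_le_card_of_injOn (fun E => E.erase v)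
    · intro E hE
      simp only [Finset.coe_filter, Set.mem_ofPred_eq, mem_KK] at hE
      obtain ⟨⟨⟨h1, h2⟩, h3⟩, h4⟩ := hE
      simp only [Finset.mem_coe, mem_KK]
      refine ⟨⟨?_, by rw [Finset.card_erase_of_mem h4]; omega⟩, h3.subset (by simpa using Set.diff_subset)⟩
      intro x hx
      rw [Finset.mem_erase] at hx
      rw [hA, Finset.mem_filter]
      exact ⟨h1 hx.2, h3 h4 hx.2 (Ne.symm hx.1)⟩
    · intro E hE F hF h
      simp only [Finset.coe_filter, Set.mem_ofPred_eq] at hE hF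
      have := congrArg (insert v) h
      simpa [Finset.insert_erase hE.2, Finset.insert_erase hF.2] using this
  have hsub : KK G (r+1) s ⊆ KK G (r+1) A ∪ (s \ A).biUnion (fun b => (KK G (r+1) s).filter (fun E => b ∈ E)) := by
    intro E hE
    by_cases h : E ⊆ A
    · apply Finset.mem_union_left
      rw [mem_KK] at hE ⊢
      exact ⟨⟨h, hE.1.2⟩, hE.2⟩
    · apply Finset.mem_union_right
      obtain ⟨b, hb, hbA⟩ := Finset.not_subset.1 h
      rw [Finset.mem_biUnion]
      exact ⟨b, Finset.mem_sdiff.2 ⟨((mem_KK _ _ _ _).1 hE).1.1 hb, hbA⟩, Finset.mem_filter.2 ⟨hE, hb⟩⟩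
  refine (Finset.card_le_card hsub).trans ((Finset.card_union_le _ _).trans ?_)
  gcongr
  apply Finset.card_biUnion_le_card_mul
  intro b hb
  exact (hmax b (Finset.mem_sdiff.1 hb).1).trans hd

lemma KK_zero {V : Type*} [DecidableEq V] (G : SimpleGraph V) (s : Finset V) : (KK G 0 s).card ≤ 1 := by
  rw [Finset.card_le_one]
  intro a ha b hb
  rw [mem_KK] at ha hb
  rw [Finset.card_eq_zero.1 ha.1.2, Finset.card_eq_zero.1 hb.1.2]

lemma zykov {V : Type*} [DecidableEq V] (G : SimpleGraph V) (q : ℕ) : ∀ (r : ℕ) (s : Finset V),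
    (∀ L ⊆ s, L.card = q + 1 → ¬ G.IsClique (L : Set V)) →
    (KK G r s).card ≤ (bal s.card q).esymm r := by
  induction q with
  | zero =>
    intro r s h
    match r with
    | 0 => rw [esymm_zero']; exact KK_zero G s
    | r+1 =>
      convert Nat.zero_le _
      rw [Finset.card_eq_zero, Finset.eq_empty_iff_forall_notMem]
      intro E hE
      rw [mem_KK] at hE
      obtain ⟨x, hx⟩ : E.Nonempty := by rw [← Finset.card_pos]; omega
      exact h {x} (by simpa using hE.1.1 hx) (by simp) (by simp)
  | succ q ih =>
    intro r s h
    match r with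
    | 0 => rw [esymm_zero']; exact KK_zero G s
    | r+1 =>
      rcases s.eq_empty_or_nonempty with rfl | hs
      · convert Nat.zero_le _
        rw [Finset.card_eq_zero, Finset.eq_empty_iff_forall_notMem]
        intro E hE
        rw [mem_KK] at hE
        have := Finset.card_le_card hE.1.1
        simp at this
        have h2 := hE.1.2
        simp [this] at h2
      obtain ⟨v, hv, A, hAs, hA, hle⟩ := KK_rec G r s hs
      have hfree : ∀ L ⊆ A, L.card = q + 1 → ¬ G.IsClique (L : Set V) := by
        intro L hL hc hcl
        have hvL : v ∉ L := fun hh => G.loopless.irrefl v (hA v (hL hh))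
        refine h (insert v L) (Finset.insert_subset hv (hL.trans hAs)) (by rw [Finset.card_insert_of_notMem hvL, hc]) ?_
        rw [Finset.coe_insert, SimpleGraph.isClique_insert]
        exact ⟨hcl, fun b hb _ => hA b (hL hb)⟩
      have h1 := ih (r+1) A hfree
      have h2 := ih r A hfree
      calc _ ≤ _ := hle
        _ ≤ (bal A.card q).esymm (r+1) + (s \ A).card * (bal A.card q).esymm r := by gcongr
        _ = ((s \ A).card ::ₘ bal A.card q).esymm (r+1) := (esymm_cons_succ _ _ _).symm
        _ ≤ _ := esymm_le_bal _ _ _ rfl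
        _ = _ := by
          have hbc : (bal A.card q).card = q := by simp [bal]
          rw [Multiset.card_cons, hbc, Multiset.sum_cons]
          rcases Nat.eq_zero_or_pos q with rfl | hq
          · have : A = ∅ := by
              rw [Finset.eq_empty_iff_forall_notMem]
              intro x hx
              exact hfree {x} (by simpa using hx) (by simp) (by simp)
            subst this
            simp [bal]
          · have : (bal A.card q).sum = A.card := bal_sum _ _ hq
            rw [this, Finset.card_sdiff_add_card_eq_card hAs]


/-- the minimum size of a set `M` of `r`-subsets of `[n]` such that
every `ℓ`-subset `L ⊆ [n]` contains a pair `{a,b}` whose full star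
`{E ∈ C([n],r) : {a,b} ⊆ E}` is contained in `M`, equals `C(n,r) - t_r(n,ℓ-1)`
(equivalently, this is the initial degree of the missing codegree-star ideal
`J^{(r)}_{n,ℓ}`). -/
theorem min_star_cover_size (n ℓ r : ℕ) (hn : 2 ≤ n) (hℓ : 2 ≤ ℓ) (hr : 2 ≤ r) :
    IsLeast
      {m | ∃ M : Finset (Finset (Fin n)),
        M ⊆ Finset.univ.powersetCard r ∧
        (∀ L : Finset (Fin n), L.card = ℓ →
          ∃ a ∈ L, ∃ b ∈ L, a ≠ b ∧
            ∀ E ∈ (Finset.univ : Finset (Fin n)).powersetCard r,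
              a ∈ E → b ∈ E → E ∈ M) ∧
        m = M.card}
      (Nat.choose n r - turanNum n (ℓ - 1) r) := by
  classical
  obtain ⟨q, rfl⟩ : ∃ q, ℓ = q + 1 := ⟨ℓ - 1, by omega⟩
  have hq : 0 < q := by omega
  rw [Nat.add_sub_cancel]
  have lower : ∀ M : Finset (Finset (Fin n)), M ⊆ Finset.univ.powersetCard r →
        (∀ L : Finset (Fin n), L.card = q + 1 →
          ∃ a ∈ L, ∃ b ∈ L, a ≠ b ∧
            ∀ E ∈ (Finset.univ : Finset (Fin n)).powersetCard r,
              a ∈ E → b ∈ E → E ∈ M) → Nat.choose n r - turanNum n q r ≤ M.card := by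
    intro M hM hL
    let G : SimpleGraph (Fin n) :=
      { Adj := fun a b => a ≠ b ∧ ∃ E ∈ (Finset.univ : Finset (Fin n)).powersetCard r, a ∈ E ∧ b ∈ E ∧ E ∉ M
        symm := ⟨fun a b ⟨h, E, h1, h2, h3, h4⟩ => ⟨h.symm, E, h1, h3, h2, h4⟩⟩
        loopless := ⟨fun a h => h.1 rfl⟩ }
    have hz := zykov G q r Finset.univ (by
      intro L _ hc hcl
      obtain ⟨a, ha, b, hb, hab, hE⟩ := hL L hc
      obtain ⟨_, E, h1, h2, h3, h4⟩ := hcl ha hb hab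
      exact h4 (hE E h1 h2 h3))
    rw [Finset.card_univ, Fintype.card_fin, ← turanNum_eq] at hz
    have hsub : Finset.univ.powersetCard r \ M ⊆ KK G r Finset.univ := by
      intro E hE
      obtain ⟨h1, h2⟩ := Finset.mem_sdiff.1 hE
      rw [mem_KK]
      refine ⟨Finset.mem_powersetCard.1 h1, ?_⟩
      intro a ha b hb hab
      exact ⟨hab, E, h1, ha, hb, h2⟩
    have h3 := (Finset.card_le_card hsub).trans hz
    rw [Finset.card_sdiff_of_subset hM, Finset.card_powersetCard, Finset.card_univ, Fintype.card_fin] at h3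
    omega
  constructor
  · let P : Finset (Fin n) → Prop := fun E => Set.InjOn (fun i : Fin n => (i:ℕ) % q) (E : Set (Fin n))
    let M := ((Finset.univ : Finset (Fin n)).powersetCard r).filter (fun E => ¬ P E)
    have hM : M ⊆ Finset.univ.powersetCard r := Finset.filter_subset _ _
    have hML : ∀ L : Finset (Fin n), L.card = q + 1 →
          ∃ a ∈ L, ∃ b ∈ L, a ≠ b ∧
            ∀ E ∈ (Finset.univ : Finset (Fin n)).powersetCard r,
              a ∈ E → b ∈ E → E ∈ M := by
      intro L hL
      obtain ⟨a, ha, b, hb, hab, he⟩ := Finset.exists_ne_map_eq_of_card_lt_of_maps_to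
        (s := L) (t := Finset.range q) (f := fun i : Fin n => (i:ℕ) % q) (by simp [hL])
        (by intro x _; simpa using Nat.mod_lt _ hq)
      refine ⟨a, ha, b, hb, hab, fun E hE haE hbE => Finset.mem_filter.2 ⟨hE, fun hP => hab (hP haE hbE he)⟩⟩
    refine ⟨M, hM, hML, le_antisymm (lower M hM hML) ?_⟩
    have h1 := turan_le_transversal n q r hq
    have h2 := Finset.card_filter_add_card_filter_not (s := (Finset.univ : Finset (Fin n)).powersetCard r) P
    rw [Finset.card_powersetCard, Finset.card_univ, Fintype.card_fin] at h2
    have h3 : turanNum n q r ≤ (((Finset.univ : Finset (Fin n)).powersetCard r).filter P).card := by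
      convert h1
    change (((Finset.univ : Finset (Fin n)).powersetCard r).filter (fun E => ¬ P E)).card ≤ _
    omega
  · rintro m ⟨M, hM, hL, rfl⟩
    exact lower M hM hL
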